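/- Suppose the pair (G, A) is geodesically stackable, with stacking map Φ all of whose values have length at most M. Then for every n ∈ ℕ and all g, h ∈ G with ℓ(g) = ℓ(h) = n and ℓ(g⁻¹h) = 1, there is a word w of length at most M with π(w) = g⁻¹h whose path from g lies in the ball of radius n. -/

import Mathlib

namespace Stk

variable {G : Type*} [Group G] {A : Type*}

/-- Evaluation of a word over the generating alphabet in the group. -/
def eval (ρ : A → G) (w : List A) : G := (w.map ρ).prod

/-- `C` is a set of normal forms: evaluation restricted to `C` is a bijection onto `G`. -/
def IsNormalFormSet (ρ : A → G) (C : Set (List A)) : Prop :=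
  ∀ g : G, ∃! w : List A, w ∈ C ∧ eval ρ w = g

/-- The directed edge `(g, a)` of the Cayley graph is degenerate with respect to `C`. -/
def IsDegenerate (ρ : A → G) (ι : A → A) (C : Set (List A)) (e : G × A) : Prop :=
  ∃ y₁ y₂ : List A, y₁ ∈ C ∧ eval ρ y₁ = e.1 ∧ y₂ ∈ C ∧ eval ρ y₂ = e.1 * ρ e.2 ∧
    (y₁ ++ [e.2] = y₂ ∨ y₁ = y₂ ++ [ι e.2])

/-- A non-degenerate edge is recursive. -/
def IsRecursive (ρ : A → G) (ι : A → A) (C : Set (List A)) (e : G × A) : Prop :=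
  ¬ IsDegenerate ρ ι C e

/-- `e` is one of the edges along the path starting at `g` labeled by the word `w`. -/
def EdgeOnPath (ρ : A → G) (g : G) (w : List A) (e : G × A) : Prop :=
  ∃ i : Fin w.length, e = (g * eval ρ (w.take i), w.get i)

/-- A stackable structure for `(G, A)`: a normal form set `C` containing the empty word,
a well-founded strict partial order `lt` on the recursive edges, and a constant `k`,
such that each edge `(g, a)` admits a word of length at most `k` evaluating to `ρ a`,
each of whose edges along the path from `g` is degenerate or recursive and `lt`-below
`(g, a)`. -/
def IsStackableStructure (ρ : A → G) (ι : A → A) (C : Set (List A))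
    (lt : G × A → G × A → Prop) (k : ℕ) : Prop :=
  ([] : List A) ∈ C ∧ IsNormalFormSet ρ C ∧
  (∀ e e' : G × A, lt e e' → IsRecursive ρ ι C e ∧ IsRecursive ρ ι C e') ∧
  Transitive lt ∧ WellFounded lt ∧
  ∀ g : G, ∀ a : A, ∃ w : List A, w.length ≤ k ∧ eval ρ w = ρ a ∧
    ∀ e' : G × A, EdgeOnPath ρ g w e' → IsDegenerate ρ ι C e' ∨ lt e' (g, a)

/-- The pair `(G, A)` is stackable. -/
def IsStackable (ρ : A → G) (ι : A → A) : Prop :=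
  ∃ (C : Set (List A)) (lt : G × A → G × A → Prop) (k : ℕ),
    IsStackableStructure ρ ι C lt k

/-- A stacking map for a stackable structure. -/
def IsStackingMap (ρ : A → G) (ι : A → A) (C : Set (List A))
    (lt : G × A → G × A → Prop) (k : ℕ) (Φ : G × A → List A) : Prop :=
  ∀ e : G × A, IsRecursive ρ ι C e →
    eval ρ (Φ e) = ρ e.2 ∧ (Φ e).length ≤ k ∧
    ∀ e' : G × A, EdgeOnPath ρ e.1 (Φ e) e' → IsDegenerate ρ ι C e' ∨ lt e' e

/-- A stacking map extended by `Φ (g, a) = [a]` on degenerate edges. -/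
def IsExtendedStackingMap (ρ : A → G) (ι : A → A) (C : Set (List A))
    (lt : G × A → G × A → Prop) (k : ℕ) (Φ : G × A → List A) : Prop :=
  (∀ e : G × A, IsDegenerate ρ ι C e → Φ e = [e.2]) ∧ IsStackingMap ρ ι C lt k Φ

/-- A word is freely reduced if no letter is followed by its formal inverse. -/
def FreelyReduced (ι : A → A) (w : List A) : Prop :=
  List.Chain' (fun a b => b ≠ ι a) w


/-- Word length of a group element with respect to the generating set. -/
noncomputable def wlen (ρ : A → G) (g : G) : ℕ :=
  sInf {n : ℕ | ∃ w : List A, w.length = n ∧ eval ρ w = g}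

/-- The path starting at `g` labeled by `w` lies in the ball of radius `n`: all vertices
are within distance `n` of the identity, and no edge has both endpoints at distance
exactly `n`. -/
def PathInBall (ρ : A → G) (g : G) (w : List A) (n : ℕ) : Prop :=
  (∀ p : List A, p <+: w → wlen ρ (g * eval ρ p) ≤ n) ∧
  ∀ (p : List A) (a : A), p ++ [a] <+: w →
    ¬ (wlen ρ (g * eval ρ p) = n ∧ wlen ρ (g * eval ρ (p ++ [a])) = n)

/-- `(G, A)` is almost convex. -/
def IsAlmostConvex (ρ : A → G) : Prop :=
  ∃ k : ℕ, ∀ (n : ℕ) (g h : G), wlen ρ g = n → wlen ρ h = n →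
    wlen ρ (g⁻¹ * h) ≤ 2 →
    ∃ w : List A, w.length ≤ k ∧ eval ρ w = g⁻¹ * h ∧ PathInBall ρ g w n

/-- The average distance to the identity of the endpoints of an edge. -/
noncomputable def edgeDist (ρ : A → G) (e : G × A) : ℚ :=
  ((wlen ρ e.1 : ℚ) + (wlen ρ (e.1 * ρ e.2) : ℚ)) / 2

/-- The basic relation whose transitive closure is `<_Φ`: `e'` precedes `e` if both are
recursive and `e'` lies along the path of `Φ e`. -/
def FlowPrec (ρ : A → G) (ι : A → A) (C : Set (List A)) (Φ : G × A → List A)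
    (e' e : G × A) : Prop :=
  IsRecursive ρ ι C e ∧ IsRecursive ρ ι C e' ∧ EdgeOnPath ρ e.1 (Φ e) e'

/-- `(G, A)` is geodesically stackable: stackable with geodesic normal forms and a
stacking map compatible with distance to the identity. -/
def IsGeodesicallyStackable (ρ : A → G) (ι : A → A) : Prop :=
  ∃ (C : Set (List A)) (lt : G × A → G × A → Prop) (k : ℕ) (Φ : G × A → List A),
    IsStackableStructure ρ ι C lt k ∧ IsStackingMap ρ ι C lt k Φ ∧
    (∀ w ∈ C, w.length = wlen ρ (eval ρ w)) ∧
    ∀ e' e : G × A, Relation.TransGen (FlowPrec ρ ι C Φ) e' e →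
      edgeDist ρ e' < edgeDist ρ e

/-!
Let `a` label an edge from `g` to `h`, both on the sphere of radius `n`. With geodesic normal forms
every degenerate edge changes the word length, so `(g, a)` is recursive, and the recursive edges
along `Φ (g, a)` have average distance less than `n`. Freely reduce `Φ (g, a)`: this only deletes
edges. An edge with an endpoint outside the ball of radius `n` has average distance at least `n`,
hence is degenerate, so outside the ball the path runs in the tree of normal forms. Being reduced,
once it has left the ball it can never turn back, and since it ends at `h` it never leaves. An edge
joining two vertices of the sphere of radius `n` is neither degenerate nor of average distance less
than `n`, so none occurs.
-/

section

variable {ρ : A → G} {ι : A → A} {C : Set (List A)} {g : G} {a b : A} {u v w : List A}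
  {e : G × A} {n : ℕ}

@[simp]
theorem eval_nil : eval ρ [] = 1 := rfl

@[simp]
theorem eval_cons : eval ρ (a :: w) = ρ a * eval ρ w := by
  simp [eval]

@[simp]
theorem eval_append : eval ρ (u ++ v) = eval ρ u * eval ρ v := by
  simp [eval]

theorem IsNormalFormSet.surjective_eval (hC : IsNormalFormSet ρ C) :
    Function.Surjective (eval ρ) := fun g =>
  let ⟨w, ⟨_, hw⟩, _⟩ := hC g
  ⟨w, hw⟩

theorem wlen_eval_le (w : List A) : wlen ρ (eval ρ w) ≤ w.length :=
  Nat.sInf_le ⟨w, rfl, rfl⟩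

theorem exists_length_eq_wlen (hg : g ∈ Set.range (eval ρ)) :
    ∃ w : List A, w.length = wlen ρ g ∧ eval ρ w = g :=
  let ⟨w, hw⟩ := hg
  Nat.sInf_mem (s := {n | ∃ w : List A, w.length = n ∧ eval ρ w = g}) ⟨_, w, rfl, hw⟩

theorem exists_generator_of_wlen_eq_one (hg : wlen ρ g = 1) : ∃ a, ρ a = g := by
  have hmem : wlen ρ g ∈ {n | ∃ w : List A, w.length = n ∧ eval ρ w = g} :=
    Nat.sInf_mem (Nat.nonempty_of_pos_sInf (hg ▸ one_pos : 0 < wlen ρ g))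
  obtain ⟨w, hlen, rfl⟩ := hmem
  obtain ⟨a, rfl⟩ := List.length_eq_one_iff.1 (hlen.trans hg)
  exact ⟨a, by simp⟩

theorem wlen_mul_generator_le (hg : g ∈ Set.range (eval ρ)) (a : A) :
    wlen ρ (g * ρ a) ≤ wlen ρ g + 1 := by
  obtain ⟨w, hlen, rfl⟩ := exists_length_eq_wlen hg
  simpa [hlen] using wlen_eval_le (ρ := ρ) (w ++ [a])

theorem wlen_le_wlen_mul_generator_add_one (hρι : ∀ a, ρ (ι a) = (ρ a)⁻¹)
    (hg : g ∈ Set.range (eval ρ)) (a : A) : wlen ρ g ≤ wlen ρ (g * ρ a) + 1 := by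
  obtain ⟨w, rfl⟩ := hg
  have hwa : eval ρ w * ρ a ∈ Set.range (eval ρ) := ⟨w ++ [a], by simp⟩
  simpa [hρι] using wlen_mul_generator_le hwa (ι a)

theorem le_edgeDist_of_lt_max (hρι : ∀ a, ρ (ι a) = (ρ a)⁻¹) (hg : g ∈ Set.range (eval ρ))
    (h : n < max (wlen ρ g) (wlen ρ (g * ρ a))) : n ≤ edgeDist ρ (g, a) := by
  have hup := wlen_mul_generator_le hg a
  have hdown := wlen_le_wlen_mul_generator_add_one hρι hg a
  have hsum : n * 2 ≤ wlen ρ g + wlen ρ (g * ρ a) := by omega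
  rw [edgeDist, le_div_iff₀ two_pos]
  exact_mod_cast hsum

theorem edgeDist_eq_of_wlen_eq (hg : wlen ρ g = n) (hga : wlen ρ (g * ρ a) = n) :
    edgeDist ρ (g, a) = n := by
  simp [edgeDist, hg, hga]

theorem edgeOnPath_cons :
    EdgeOnPath ρ g (a :: w) e ↔ e = (g, a) ∨ EdgeOnPath ρ (g * ρ a) w e := by
  simp [EdgeOnPath, Fin.exists_fin_succ, mul_assoc]

theorem pathInBall_nil : PathInBall ρ g [] n ↔ wlen ρ g ≤ n := by
  simp [PathInBall]

theorem pathInBall_cons :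
    PathInBall ρ g (a :: w) n ↔
      wlen ρ g ≤ n ∧ ¬ (wlen ρ g = n ∧ wlen ρ (g * ρ a) = n) ∧ PathInBall ρ (g * ρ a) w n := by
  constructor
  · rintro ⟨hvert, hedge⟩
    refine ⟨by simpa using hvert [] (List.nil_prefix), by simpa using hedge [] a (by simp),
      fun p hp => ?_, fun p b hp => ?_⟩
    · simpa [mul_assoc] using hvert (a :: p) (by simpa using hp)
    · simpa [mul_assoc] using hedge (a :: p) b (by simpa using hp)
  · rintro ⟨hg, hfirst, hvert, hedge⟩
    refine ⟨fun p hp => ?_, fun p b hp => ?_⟩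
    · obtain rfl | ⟨q, rfl, hq⟩ := List.prefix_cons_iff.1 hp
      · simpa using hg
      · simpa [mul_assoc] using hvert q hq
    · rcases p with - | ⟨c, q⟩ <;> obtain ⟨rfl, hq⟩ := List.cons_prefix_cons.1 hp
      · simpa using hfirst
      · simpa [mul_assoc] using hedge q b hq

theorem freelyReduced_cons_cons :
    FreelyReduced ι (a :: b :: w) ↔ b ≠ ι a ∧ FreelyReduced ι (b :: w) :=
  List.isChain_cons_cons

theorem FreelyReduced.of_cons (h : FreelyReduced ι (a :: w)) : FreelyReduced ι w :=
  List.IsChain.tail h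

theorem exists_freelyReduced_subpath (hρι : ∀ a, ρ (ι a) = (ρ a)⁻¹) (g : G) (w : List A) :
    ∃ v : List A, FreelyReduced ι v ∧ v.length ≤ w.length ∧ eval ρ v = eval ρ w ∧
      ∀ e, EdgeOnPath ρ g v e → EdgeOnPath ρ g w e := by
  induction w generalizing g with
  | nil => exact ⟨[], List.isChain_nil, le_rfl, rfl, fun _ => id⟩
  | cons a w ih =>
    obtain ⟨v, hred, hlen, heval, hedge⟩ := ih (g * ρ a)
    by_cases hcancel : ∃ u, v = ι a :: u
    · obtain ⟨u, rfl⟩ := hcancel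
      refine ⟨u, hred.of_cons, ?_, by simp [← heval, hρι], fun e he => ?_⟩
      · simp only [List.length_cons] at hlen ⊢
        omega
      · refine edgeOnPath_cons.2 (.inr (hedge e (edgeOnPath_cons.2 (.inr ?_))))
        simpa [hρι] using he
    · refine ⟨a :: v, ?_, by simpa using hlen, by simp [heval], fun e he =>
        edgeOnPath_cons.2 ((edgeOnPath_cons.1 he).imp_right (hedge e))⟩
      cases v with
      | nil => exact List.isChain_singleton a
      | cons b u => exact freelyReduced_cons_cons.2 ⟨by rintro rfl; exact hcancel ⟨u, rfl⟩, hred⟩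

theorem IsDegenerate.ascends_or_descends (hgeo : ∀ w ∈ C, w.length = wlen ρ (eval ρ w))
    (h : IsDegenerate ρ ι C (g, a)) :
    (wlen ρ g < wlen ρ (g * ρ a) ∧ ∃ y, y ++ [a] ∈ C ∧ eval ρ (y ++ [a]) = g * ρ a) ∨
      (wlen ρ (g * ρ a) < wlen ρ g ∧ ∃ y, y ++ [ι a] ∈ C ∧ eval ρ (y ++ [ι a]) = g) := by
  obtain ⟨y₁, y₂, hy₁, heval₁, hy₂, heval₂, hy | hy⟩ := h
  all_goals
    dsimp only at heval₁ heval₂ hy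
    rw [← heval₂, ← heval₁, ← hgeo _ hy₁, ← hgeo _ hy₂]
  · exact .inl ⟨by simp [← hy], y₁, hy ▸ hy₂, congrArg _ hy⟩
  · exact .inr ⟨by simp [hy], y₂, hy ▸ hy₁, congrArg _ hy.symm⟩

theorem IsDegenerate.wlen_ne (hgeo : ∀ w ∈ C, w.length = wlen ρ (eval ρ w))
    (h : IsDegenerate ρ ι C (g, a)) : wlen ρ g ≠ wlen ρ (g * ρ a) :=
  (h.ascends_or_descends hgeo).elim (fun hup => hup.1.ne) fun hdown => hdown.1.ne'

theorem IsDegenerate.eq_inv_of_peak (hC : IsNormalFormSet ρ C)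
    (hgeo : ∀ w ∈ C, w.length = wlen ρ (eval ρ w))
    (ha : IsDegenerate ρ ι C (g, a)) (hb : IsDegenerate ρ ι C (g * ρ a, b))
    (hup : wlen ρ g < wlen ρ (g * ρ a)) (hdown : wlen ρ (g * ρ a * ρ b) < wlen ρ (g * ρ a)) :
    a = ι b := by
  obtain ⟨y, hy⟩ := ((ha.ascends_or_descends hgeo).resolve_right fun h => h.1.not_gt hup).2
  obtain ⟨z, hz⟩ := ((hb.ascends_or_descends hgeo).resolve_left fun h => h.1.not_gt hdown).2
  exact List.singleton_injective (List.append_inj' ((hC _).unique hy hz) rfl).2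

/-- The recursive edges along the path from `g` labeled by `w` have average distance to the identity
less than `n`. For `edgeDist ρ (g, a) = n`, this is the condition that the flow order of a
geodesically stackable pair imposes on the path of `Φ (g, a)`. -/
def RecursiveEdgesBelow (ρ : A → G) (ι : A → A) (C : Set (List A)) (g : G) (w : List A) (n : ℕ) :
    Prop :=
  ∀ e, EdgeOnPath ρ g w e → IsRecursive ρ ι C e → edgeDist ρ e < n

namespace RecursiveEdgesBelow

theorem of_cons (h : RecursiveEdgesBelow ρ ι C g (a :: w) n) :
    RecursiveEdgesBelow ρ ι C (g * ρ a) w n :=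
  fun e he => h e (edgeOnPath_cons.2 (.inr he))

theorem isDegenerate_of_le_edgeDist (h : RecursiveEdgesBelow ρ ι C g (a :: w) n)
    (hn : n ≤ edgeDist ρ (g, a)) : IsDegenerate ρ ι C (g, a) :=
  of_not_not fun hrec => (h _ (edgeOnPath_cons.2 (.inl rfl)) hrec).not_ge hn

theorem lt_wlen_mul_eval (hι : Function.Involutive ι) (hρι : ∀ a, ρ (ι a) = (ρ a)⁻¹)
    (hC : IsNormalFormSet ρ C) (hgeo : ∀ w ∈ C, w.length = wlen ρ (eval ρ w))
    (h : RecursiveEdgesBelow ρ ι C g (a :: w) n) (hred : FreelyReduced ι (a :: w))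
    (hup : wlen ρ g < wlen ρ (g * ρ a)) (hn : n < wlen ρ (g * ρ a)) :
    n < wlen ρ (g * eval ρ (a :: w)) := by
  induction w generalizing g a with
  | nil => simpa using hn
  | cons b w ih =>
    obtain ⟨hba, hred'⟩ := freelyReduced_cons_cons.1 hred
    have hdeg_a : IsDegenerate ρ ι C (g, a) := h.isDegenerate_of_le_edgeDist
      (le_edgeDist_of_lt_max hρι (hC.surjective_eval _) (lt_max_of_lt_right hn))
    have hdeg_b : IsDegenerate ρ ι C (g * ρ a, b) := h.of_cons.isDegenerate_of_le_edgeDist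
      (le_edgeDist_of_lt_max hρι (hC.surjective_eval _) (lt_max_of_lt_left hn))
    rcases (hdeg_b.wlen_ne hgeo).lt_or_gt with hclimb | hdown
    · simpa [mul_assoc] using ih h.of_cons hred' hclimb (hn.trans hclimb)
    · exact absurd (hι.eq_iff.1 (hdeg_a.eq_inv_of_peak hC hgeo hdeg_b hup hdown).symm) hba

theorem pathInBall (hι : Function.Involutive ι) (hρι : ∀ a, ρ (ι a) = (ρ a)⁻¹)
    (hC : IsNormalFormSet ρ C) (hgeo : ∀ w ∈ C, w.length = wlen ρ (eval ρ w))
    (h : RecursiveEdgesBelow ρ ι C g w n) (hred : FreelyReduced ι w)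
    (hstart : wlen ρ g ≤ n) (hend : wlen ρ (g * eval ρ w) ≤ n) : PathInBall ρ g w n := by
  induction w generalizing g with
  | nil => exact pathInBall_nil.2 hstart
  | cons a w ih =>
    refine pathInBall_cons.2 ⟨hstart, fun ⟨hg, hga⟩ => ?_, ?_⟩
    · have hdeg := h.isDegenerate_of_le_edgeDist (edgeDist_eq_of_wlen_eq hg hga).ge
      exact hdeg.wlen_ne hgeo (hg.trans hga.symm)
    · refine ih h.of_cons hred.of_cons ?_ (by simpa [mul_assoc] using hend)
      by_contra! hout
      exact hend.not_gt (h.lt_wlen_mul_eval hι hρι hC hgeo hred (hstart.trans_lt hout) hout)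

end RecursiveEdgesBelow

end

theorem path_in_ball_of_geodesically_stackable_general {G : Type*} [Group G] {A : Type*}
    (ρ : A → G) (ι : A → A) (hinv : Function.Involutive ι) (hρι : ∀ a : A, ρ (ι a) = (ρ a)⁻¹)
    (C : Set (List A)) (Φ : G × A → List A) (M : ℕ) (hC : IsNormalFormSet ρ C)
    (hgeo : ∀ w ∈ C, w.length = wlen ρ (eval ρ w))
    (hΦ : ∀ e : G × A, IsRecursive ρ ι C e → eval ρ (Φ e) = ρ e.2)
    (hα : ∀ e' e : G × A, FlowPrec ρ ι C Φ e' e → edgeDist ρ e' < edgeDist ρ e)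
    (hM : ∀ e : G × A, IsRecursive ρ ι C e → (Φ e).length ≤ M) :
    ∀ (n : ℕ) (g h : G), wlen ρ g = n → wlen ρ h = n → wlen ρ (g⁻¹ * h) = 1 →
      ∃ w : List A, w.length ≤ M ∧ eval ρ w = g⁻¹ * h ∧ PathInBall ρ g w n := by
  intro n g h hg hh hgh
  obtain ⟨a, ha⟩ := exists_generator_of_wlen_eq_one hgh
  obtain rfl : g * ρ a = h := by rw [ha, mul_inv_cancel_left]
  have hrec : IsRecursive ρ ι C (g, a) := fun hdeg => hdeg.wlen_ne hgeo (hg.trans hh.symm)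
  obtain ⟨w, hred, hlen, heval, hsub⟩ := exists_freelyReduced_subpath hρι g (Φ (g, a))
  have hw : eval ρ w = ρ a := heval.trans (hΦ _ hrec)
  have hbelow : RecursiveEdgesBelow ρ ι C g w n := fun e he hrec' =>
    edgeDist_eq_of_wlen_eq hg hh ▸ hα e (g, a) ⟨hrec, hrec', hsub e he⟩
  exact ⟨w, hlen.trans (hM _ hrec), hw.trans ha,
    hbelow.pathInBall hinv hρι hC hgeo hred hg.le (hw ▸ hh.le)⟩

/-- in a geodesically stackable pair with stacking map bounded by `M`,
adjacent elements of a sphere of radius `n` are joined by a path of length at most `M`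
inside the ball of radius `n`. -/
theorem path_in_ball_of_geodesically_stackable {G : Type*} [Group G] {A : Type*}
    [Fintype A]
    (ρ : A → G) (ι : A → A)
    (hgen : Subgroup.closure (Set.range ρ) = ⊤)
    (hne : ∀ a : A, ρ a ≠ 1)
    (hinv : Function.Involutive ι)
    (hρι : ∀ a : A, ρ (ι a) = (ρ a)⁻¹)
    (C : Set (List A)) (lt : G × A → G × A → Prop) (k : ℕ) (Φ : G × A → List A) (M : ℕ)
    (hstk : IsStackableStructure ρ ι C lt k)
    (hΦ : IsStackingMap ρ ι C lt k Φ)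
    (hgeo : ∀ w ∈ C, w.length = wlen ρ (eval ρ w))
    (hα : ∀ e' e : G × A, Relation.TransGen (FlowPrec ρ ι C Φ) e' e →
      edgeDist ρ e' < edgeDist ρ e)
    (hM : ∀ e : G × A, IsRecursive ρ ι C e → (Φ e).length ≤ M) :
    ∀ (n : ℕ) (g h : G), wlen ρ g = n → wlen ρ h = n → wlen ρ (g⁻¹ * h) = 1 →
      ∃ w : List A, w.length ≤ M ∧ eval ρ w = g⁻¹ * h ∧ PathInBall ρ g w n :=
  path_in_ball_of_geodesically_stackable_general ρ ι hinv hρι C Φ M hstk.2.1 hgeo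
    (fun e he => (hΦ e he).1) (fun e' e he => hα e' e (.single he)) hM

end Stk
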